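/- (Covering-number aggregation from the proof of Theorem 6.) Let y_1, …, y_n be fixed finite sequences of points in ℝ^d with lengths M_1, …, M_n ≥ 1, let 𝒜 be a class of Borel subsets of ℝ^d, and set σ_n² := n^{-1}∑_{j=1}^n M_j². For A ∈ 𝒜 let H_j(A) count the points of y_j lying in A, and consider the class F := { (H_1(A), …, H_n(A)) : A ∈ 𝒜 } ⊂ ℝ^n equipped with the norm ‖h‖ := √(n^{-1}∑_{j=1}^n h_j²), and for each j the binary class F_j := { (1{y ∈ A})_{y ∈ y_j} : A ∈ 𝒜 } ⊂ {0,1}^{M_j} equipped with the norm ‖b‖ := √(M_j^{-1}∑_{k=1}^{M_j} b_k²). Then for every ε ∈ [0,1], the covering numbers satisfy N(σ_n·ε, F) ≤ ∏_{j=1}^n N(ε, F_j); in particular ln N(σ_n·ε, F) ≤ ∑_{j=1}^n ln N(ε, F_j). -/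

import Mathlib

/-!
The map `b ↦ ∑_{k < M_j} b_k` sends the indicator vector of `A` along `y_j` to the count `H_j(A)`,
and by Cauchy–Schwarz it is `M_j`-Lipschitz from the normalised Euclidean distance to the real
line (`sq_sum_range_sub_le`). Choosing minimal `ε`-covers `C_j` of the binary classes, the vectors
of sums `(∑_{k < M_j} c_j k)_j` with `c ∈ ∏_j C_j` therefore form a `σ_n ε`-cover of the class of
counts, with at most `∏_j |C_j|` elements. Minimal covers exist because the binary class restricted
to the first `M_j` coordinates is finite (`exists_cover_indicator`).

The logarithmic form follows by taking logarithms; when the left covering number is `0` (which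
happens when the class is empty) its logarithm is `0` and the right side is nonnegative.
-/

/- Statement 18 (covering-number aggregation from the proof of Theorem 6): for fixed finite
sequences with lengths `M_j ≥ 1` and `σ_n² = n⁻¹∑ M_j²`, one has
`N(σ_n·ε, F) ≤ ∏_j N(ε, F_j)` for every `ε ∈ [0,1]`, hence
`ln N(σ_n·ε, F) ≤ ∑_j ln N(ε, F_j)`. -/

namespace Stmt18

open MeasureTheory

/-- The covering number of `G` at radius `ε` with respect to the distance `dist`:
the smallest cardinality of a finite set `C` such that every `g ∈ G` is within
distance `ε` of some element of `C`. -/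
noncomputable def coverNum {ι : Type*} (dist : ι → ι → ℝ) (G : Set ι) (ε : ℝ) : ℕ :=
  sInf {k : ℕ | ∃ C : Finset ι, C.card = k ∧ ∀ g ∈ G, ∃ c ∈ C, dist g c ≤ ε}

theorem coverNum_le_card {ι : Type*} {dist : ι → ι → ℝ} {G : Set ι} {ε : ℝ} (C : Finset ι)
    (hC : ∀ g ∈ G, ∃ c ∈ C, dist g c ≤ ε) : coverNum dist G ε ≤ C.card :=
  Nat.sInf_le ⟨C, rfl, hC⟩

/-- The infimum defining `coverNum` is attained as soon as some finite cover exists; without one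
it would be the junk value `sInf ∅ = 0`. -/
theorem exists_card_eq_coverNum {ι : Type*} {dist : ι → ι → ℝ} {G : Set ι} {ε : ℝ}
    (h : ∃ C : Finset ι, ∀ g ∈ G, ∃ c ∈ C, dist g c ≤ ε) :
    ∃ C : Finset ι, C.card = coverNum dist G ε ∧ ∀ g ∈ G, ∃ c ∈ C, dist g c ≤ ε := by
  obtain ⟨C, hC⟩ := h
  exact Nat.sInf_mem
    (s := {k : ℕ | ∃ C : Finset ι, C.card = k ∧ ∀ g ∈ G, ∃ c ∈ C, dist g c ≤ ε}) ⟨_, C, rfl, hC⟩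

/-- The indicator vectors of all subsets of `{0, …, m - 1}` form a finite cover, at distance `0`,
of the binary class. -/
theorem exists_cover_indicator {X : Type*} (𝒜 : Set (Set X)) (y : ℕ → X) (m : ℕ) {ε : ℝ}
    (hε : 0 ≤ ε) :
    ∃ C : Finset (ℕ → ℝ),
      ∀ b ∈ {b : ℕ → ℝ | ∃ A ∈ 𝒜, b = fun k => Set.indicator A (fun _ => (1 : ℝ)) (y k)},
        ∃ c ∈ C, Real.sqrt ((m : ℝ)⁻¹ * ∑ k ∈ Finset.range m, (b k - c k) ^ 2) ≤ ε := by
  classical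
  refine ⟨(Finset.range m).powerset.image (fun s k => if k ∈ s then (1 : ℝ) else 0), ?_⟩
  rintro b ⟨A, -, rfl⟩
  refine ⟨_, Finset.mem_image_of_mem _
    (Finset.mem_powerset.2 (Finset.filter_subset (fun k => y k ∈ A) (Finset.range m))), ?_⟩
  rw [Finset.sum_eq_zero]
  · simpa using hε
  · intro k hk
    simp [Finset.mem_range.1 hk, Set.indicator_apply]

/-- Cauchy–Schwarz: summing the first `m` coordinates is `m`-Lipschitz for the normalised
Euclidean distance. -/
theorem sq_sum_range_sub_le {m : ℕ} (hm : 1 ≤ m) {b c : ℕ → ℝ} {ε : ℝ} (hε : 0 ≤ ε)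
    (h : Real.sqrt ((m : ℝ)⁻¹ * ∑ k ∈ Finset.range m, (b k - c k) ^ 2) ≤ ε) :
    (∑ k ∈ Finset.range m, b k - ∑ k ∈ Finset.range m, c k) ^ 2 ≤ (m : ℝ) ^ 2 * ε ^ 2 := by
  have hm0 : (0 : ℝ) < m := by exact_mod_cast hm
  have h1 := (Real.sqrt_le_left hε).1 h
  have h2 : ∑ k ∈ Finset.range m, (b k - c k) ^ 2 ≤ m * ε ^ 2 :=
    (inv_mul_le_iff₀ hm0).1 h1
  have h3 := sq_sum_le_card_mul_sum_sq (s := Finset.range m) (f := fun k => b k - c k)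
  rw [Finset.card_range] at h3
  rw [← Finset.sum_sub_distrib]
  calc _ ≤ (m : ℝ) * ∑ k ∈ Finset.range m, (b k - c k) ^ 2 := h3
    _ ≤ m * (m * ε ^ 2) := by gcongr
    _ = _ := by ring

theorem ncard_eq_sum_indicator {X : Type*} (A : Set X) (y : ℕ → X) (m : ℕ) :
    (Set.ncard {k : ℕ | k < m ∧ y k ∈ A} : ℝ) =
      ∑ k ∈ Finset.range m, Set.indicator A (fun _ => (1 : ℝ)) (y k) := by
  classical
  have : {k : ℕ | k < m ∧ y k ∈ A} = ((Finset.range m).filter (fun k => y k ∈ A) : Finset ℕ) := by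
    ext k
    simp
  rw [this, Set.ncard_coe_finset]
  simp [Set.indicator_apply]

theorem log_natCast_le_sum_log {ι : Type*} [Fintype ι] {N : ℕ} {a : ι → ℕ} (h : N ≤ ∏ j, a j) :
    Real.log N ≤ ∑ j, Real.log (a j) := by
  rcases Nat.eq_zero_or_pos N with rfl | hN
  · simpa using Finset.sum_nonneg fun j _ => Real.log_natCast_nonneg (a j)
  · have ha : ∏ j, a j ≠ 0 := (hN.trans_le h).ne'
    rw [← Real.log_prod fun j hj => Nat.cast_ne_zero.2 (Finset.prod_ne_zero_iff.1 ha j hj)]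
    exact Real.log_le_log (by exact_mod_cast hN) (by exact_mod_cast h)

theorem covering_number_aggregation
    {d : ℕ} (hd : 1 ≤ d)
    (𝒜 : Set (Set (Fin d → ℝ)))
    (n : ℕ) (hn : 1 ≤ n)
    (y : Fin n → ℕ → (Fin d → ℝ)) (M : Fin n → ℕ) (hM : ∀ j, 1 ≤ M j)
    (ε : ℝ) (hε0 : 0 ≤ ε) (hε1 : ε ≤ 1) :
    coverNum
        (fun h h' : Fin n → ℝ => Real.sqrt ((n : ℝ)⁻¹ * ∑ j, (h j - h' j) ^ 2))
        {h : Fin n → ℝ | ∃ A ∈ 𝒜, h = fun j =>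
          (Set.ncard {k : ℕ | k < M j ∧ y j k ∈ A} : ℝ)}
        (Real.sqrt ((n : ℝ)⁻¹ * ∑ j, (M j : ℝ) ^ 2) * ε) ≤
      ∏ j, coverNum
        (fun b b' : ℕ → ℝ =>
          Real.sqrt (((M j : ℝ))⁻¹ * ∑ k ∈ Finset.range (M j), (b k - b' k) ^ 2))
        {b : ℕ → ℝ | ∃ A ∈ 𝒜, b = fun k => Set.indicator A (fun _ => (1 : ℝ)) (y j k)}
        ε ∧
    Real.log (coverNum
        (fun h h' : Fin n → ℝ => Real.sqrt ((n : ℝ)⁻¹ * ∑ j, (h j - h' j) ^ 2))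
        {h : Fin n → ℝ | ∃ A ∈ 𝒜, h = fun j =>
          (Set.ncard {k : ℕ | k < M j ∧ y j k ∈ A} : ℝ)}
        (Real.sqrt ((n : ℝ)⁻¹ * ∑ j, (M j : ℝ) ^ 2) * ε)) ≤
      ∑ j, Real.log (coverNum
        (fun b b' : ℕ → ℝ =>
          Real.sqrt (((M j : ℝ))⁻¹ * ∑ k ∈ Finset.range (M j), (b k - b' k) ^ 2))
        {b : ℕ → ℝ | ∃ A ∈ 𝒜, b = fun k => Set.indicator A (fun _ => (1 : ℝ)) (y j k)}
        ε) := by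
  refine (fun h => ⟨h, log_natCast_le_sum_log h⟩) ?_
  classical
  choose C hcard hC using fun j =>
    exists_card_eq_coverNum (exists_cover_indicator 𝒜 (y j) (M j) hε0)
  simp_rw [← hcard]
  rw [← Fintype.card_piFinset]
  refine le_trans (coverNum_le_card ((Fintype.piFinset C).image
    (fun c j => ∑ k ∈ Finset.range (M j), c j k)) ?_) Finset.card_image_le
  rintro _ ⟨A, hA, rfl⟩
  choose c hcC hc using fun j => hC j _ ⟨A, hA, rfl⟩
  refine ⟨_, Finset.mem_image_of_mem _ (Fintype.mem_piFinset.2 hcC), ?_⟩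
  -- `σ_n ε` is rewritten as one square root, to compare the radicands coordinatewise.
  rw [← Real.sqrt_sq hε0, ← Real.sqrt_mul (by positivity), mul_assoc, Finset.sum_mul]
  refine Real.sqrt_le_sqrt (mul_le_mul_of_nonneg_left (Finset.sum_le_sum fun j _ => ?_)
    (by positivity))
  beta_reduce
  rw [ncard_eq_sum_indicator]
  exact sq_sum_range_sub_le (hM j) hε0 (hc j)

end Stmt18
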